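/- Let R₁, …, R_ℓ ⊆ ℕ × ℕ be strictly monotone relations and suppose (m,n) ∈ ↓→R₁ ⋯ ↓→R_ℓ and (m',n') ∈ ↓←R₁ ⋯ ↓←R_ℓ (compositions of weak forward, respectively weak backward, relations). If n' < n, then m' < m. -/

import Mathlib

/-- The weak forward relation: `(m,n)` is related if some `n' ≥ n` has `(m,n') ∈ R`. -/
def WeakFwd (R : ℕ → ℕ → Prop) (m n : ℕ) : Prop := ∃ n' ≥ n, R m n'

/-- The weak backward relation: `(m,n)` is related if some `m' ≥ m` has `(m',n) ∈ R`. -/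
def WeakBwd (R : ℕ → ℕ → Prop) (m n : ℕ) : Prop := ∃ m' ≥ m, R m' n

/-- `R` is strictly monotone: for `(m,n), (m',n') ∈ R`, `m < m'` iff `n < n'`. -/
def StrictlyMonotoneRel (R : ℕ → ℕ → Prop) : Prop :=
  ∀ m n m' n', R m n → R m' n' → (m < m' ↔ n < n')

/-- Composition of a finite sequence of relations. -/
def CompList : List (ℕ → ℕ → Prop) → ℕ → ℕ → Prop
  | [] => fun m n => m = n
  | R :: Rs => fun m n => ∃ k, R m k ∧ CompList Rs k n

/-- The relations `F` and `B` jointly reflect `<`: whenever `F` ends strictly above `B`, it also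
starts strictly above `B`. Two relations are used because the composites of weak forward and of
weak backward relations have to be compared with each other. -/
def ReflectsLT {α β : Type*} [LT α] [LT β] (F B : α → β → Prop) : Prop :=
  ∀ ⦃m n m' n'⦄, F m n → B m' n' → n' < n → m' < m

namespace ReflectsLT

theorem eq {α : Type*} [LT α] : ReflectsLT (α := α) Eq Eq := by
  rintro m _ m' _ rfl rfl hlt
  exact hlt

theorem comp {α β γ : Type*} [LT α] [LT β] [LT γ] {F B : α → β → Prop} {F' B' : β → γ → Prop}
    (h : ReflectsLT F B) (h' : ReflectsLT F' B') :
    ReflectsLT (Relation.Comp F F') (Relation.Comp B B') := by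
  rintro m n m' n' ⟨k, hmk, hkn⟩ ⟨k', hmk', hkn'⟩ hlt
  exact h hmk hmk' (h' hkn hkn' hlt)

theorem foldr_comp {α : Type*} [LT α] {Fs Bs : List (α → α → Prop)}
    (h : List.Forall₂ ReflectsLT Fs Bs) :
    ReflectsLT (Fs.foldr Relation.Comp Eq) (Bs.foldr Relation.Comp Eq) := by
  induction h with
  | nil => exact eq
  | cons hhead _ htail => exact hhead.comp htail

theorem comp_ge_le_comp {α β : Type*} [Preorder α] [Preorder β] {F B : α → β → Prop}
    (h : ReflectsLT F B) :
    ReflectsLT (Relation.Comp F (· ≥ ·)) (Relation.Comp (· ≤ ·) B) := by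
  rintro m n m' n' ⟨p, hmp, hnp⟩ ⟨q, hmq, hqn⟩ hlt
  calc
    m' ≤ q := hmq
    _ < m := h hmp hqn (hlt.trans_le hnp)

end ReflectsLT

theorem weakFwd_weakBwd_lt_general {α : Type*} [Preorder α] (Rs : List (α → α → Prop))
    (hRs : ∀ R ∈ Rs, ReflectsLT R R) :
    ReflectsLT ((Rs.map (Relation.Comp · (· ≥ ·))).foldr Relation.Comp Eq)
      ((Rs.map (Relation.Comp (· ≤ ·))).foldr Relation.Comp Eq) := by
  apply ReflectsLT.foldr_comp
  rw [List.forall₂_map_left_iff, List.forall₂_map_right_iff, List.forall₂_same]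
  exact fun R hR => (hRs R hR).comp_ge_le_comp

theorem StrictlyMonotoneRel.reflectsLT {R : ℕ → ℕ → Prop} (hR : StrictlyMonotoneRel R) :
    ReflectsLT R R :=
  fun m n m' n' hmn hmn' => (hR m' n' m n hmn' hmn).mpr

theorem weakFwd_eq_comp_ge : WeakFwd = (Relation.Comp · (· ≥ ·)) := by
  funext R m n
  exact propext (exists_congr fun _ => and_comm)

theorem weakBwd_eq_le_comp : WeakBwd = Relation.Comp (· ≤ ·) := rfl

theorem compList_eq_foldr (Rs : List (ℕ → ℕ → Prop)) :
    CompList Rs = Rs.foldr Relation.Comp Eq := by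
  induction Rs with
  | nil => rfl
  | cons R Rs ih => exact congrArg (Relation.Comp R) ih

theorem weakFwd_weakBwd_lt (Rs : List (ℕ → ℕ → Prop))
    (hmono : ∀ R ∈ Rs, StrictlyMonotoneRel R) (m n m' n' : ℕ)
    (hfwd : CompList (Rs.map WeakFwd) m n)
    (hbwd : CompList (Rs.map WeakBwd) m' n')
    (hlt : n' < n) : m' < m := by
  simp only [compList_eq_foldr, weakFwd_eq_comp_ge, weakBwd_eq_le_comp] at hfwd hbwd
  exact weakFwd_weakBwd_lt_general Rs (fun R hR => (hmono R hR).reflectsLT) hfwd hbwd hlt
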